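/- Let W: X → Y be a discrete memoryless channel on finite alphabets, α ∈ (0,1) and r ≥ 0. Then max_{α≤β≤1} [α(1−β)/(β(1−α))](I_β(W) − r) = max over input distributions P_X of the minimum over channels Ŵ: X → Y of { [α/(1−α)]·D(P_X·Ŵ ‖ P_X·W) + max{I_1(X:Y)_{P_X·Ŵ} − r, 0} }, where the minimization is over the set of all channels from X to Y. -/

import Mathlib

open scoped ENNReal NNReal BigOperators Classical
open Filter

noncomputable section

namespace RST

/-- Base-2 logarithm `ℝ≥0∞ → EReal`, with `log 0 = ⊥` and `log ⊤ = ⊤`. -/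
def elog2 (s : ℝ≥0∞) : EReal :=
  if s = 0 then ⊥ else if s = ⊤ then ⊤ else ((Real.logb 2 s.toReal : ℝ) : EReal)

/-- Base-2 logarithm `EReal → EReal` (for nonnegative arguments). -/
def eLog2 (x : EReal) : EReal :=
  if x = ⊤ then ⊤ else if x ≤ 0 then ⊥ else ((Real.logb 2 x.toReal : ℝ) : EReal)

/-- Base-2 exponential `EReal → ℝ≥0∞`. -/
def epow2 (x : EReal) : ℝ≥0∞ :=
  if x = ⊤ then ⊤ else if x = ⊥ then 0 else ENNReal.ofReal ((2 : ℝ) ^ x.toReal)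

variable {X Y : Type*}

/-- A probability distribution on a finite alphabet, as an `ℝ≥0∞`-valued function. -/
def IsDist [Fintype X] (P : X → ℝ≥0∞) : Prop := ∑ x, P x = 1

/-- A discrete memoryless channel: every row is a probability distribution. -/
def IsChannel [Fintype X] [Fintype Y] (W : X → Y → ℝ≥0∞) : Prop := ∀ x, ∑ y, W x y = 1

/-- Order-`α` Rényi divergence (base 2), with the order `α ∈ [0,∞]` encoded as `ℝ≥0∞`.
The conventions `0/0 = 0` and `a/0 = ∞` (for `a > 0`, `α > 1`) are built into `ℝ≥0∞`
arithmetic.  The second argument is allowed to be an arbitrary nonnegative vector. -/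
def renyiD [Fintype X] (α : ℝ≥0∞) (P Q : X → ℝ≥0∞) : EReal :=
  if α = 0 then - elog2 (∑ x ∈ Finset.univ.filter fun x => P x ≠ 0, Q x)
  else if α = 1 then ∑ x, ((P x).toReal : EReal) * elog2 (P x / Q x)
  else if α = ⊤ then elog2 (⨆ x, P x / Q x)
  else (((α.toReal - 1)⁻¹ : ℝ) : EReal) *
    elog2 (∑ x, P x ^ α.toReal * Q x ^ (1 - α.toReal))

/-- The `X`-marginal of a joint distribution on `X × Y`. -/
def margX [Fintype X] [Fintype Y] (P : X × Y → ℝ≥0∞) : X → ℝ≥0∞ := fun x => ∑ y, P (x, y)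

/-- Order-`α` Rényi mutual information `I_α(X:Y)_P = min_{Q_Y} D_α(P‖P_X × Q_Y)`. -/
def renyiMI [Fintype X] [Fintype Y] (α : ℝ≥0∞) (P : X × Y → ℝ≥0∞) : EReal :=
  ⨅ Q : {Q : Y → ℝ≥0∞ // IsDist Q}, renyiD α P fun p => margX P p.1 * Q.1 p.2

/-- The joint input-output distribution `P_X · W`. -/
def joint [Fintype X] [Fintype Y] (PX : X → ℝ≥0∞) (W : X → Y → ℝ≥0∞) : X × Y → ℝ≥0∞ :=
  fun p => PX p.1 * W p.1 p.2

/-- Order-`α` Rényi capacity `I_α(W) = max_{P_X} I_α(X:Y)_{P_X · W}`. -/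
def renyiCap [Fintype X] [Fintype Y] (α : ℝ≥0∞) (W : X → Y → ℝ≥0∞) : EReal :=
  ⨆ P : {P : X → ℝ≥0∞ // IsDist P}, renyiMI α (joint P.1 W)

/-- `N` is a simulation of a channel `X → Y` with communication cost at most `c` bits:
shared randomness `K = Fin m` with distribution `PK`, a message set `{1,…,M}` with
`log₂ M ≤ c`, an encoder `E` and a decoder `D`. -/
def IsSimulation [Fintype X] [Fintype Y] (c : ℝ) (N : X → Y → ℝ≥0∞) : Prop :=
  ∃ (m M : ℕ) (PK : Fin m → ℝ≥0∞) (E : X → Fin m → Fin M → ℝ≥0∞)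
    (D : Fin M → Fin m → Y → ℝ≥0∞),
    0 < M ∧ Real.logb 2 M ≤ c ∧ (∑ k, PK k = 1) ∧
    (∀ x k, ∑ j, E x k j = 1) ∧ (∀ j k, ∑ y, D j k y = 1) ∧
    ∀ x y, N x y = ∑ k, ∑ j, PK k * E x k j * D j k y

/-- `D_α(W, N) := max_x D_α(W(·|x) ‖ N(·|x))`. -/
def chD [Fintype X] [Fintype Y] (α : ℝ≥0∞) (W N : X → Y → ℝ≥0∞) : EReal :=
  ⨆ x, renyiD α (W x) (N x)

/-- `𝖣_α(W, c) := min_{N ∈ A(W,c)} D_α(W, N)`. -/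
def simD [Fintype X] [Fintype Y] (α : ℝ≥0∞) (W : X → Y → ℝ≥0∞) (c : ℝ) : EReal :=
  ⨅ N : {N : X → Y → ℝ≥0∞ // IsSimulation c N}, chD α W N.1

/-- The `n`-fold memoryless extension `W^{×n}` of a channel `W`. -/
def prodCh [Fintype X] [Fintype Y] (n : ℕ) (W : X → Y → ℝ≥0∞) :
    (Fin n → X) → (Fin n → Y) → ℝ≥0∞ :=
  fun xs ys => ∏ i, W (xs i) (ys i)

/-- A sequence of communication costs with rate at most `r`. -/
def RateOK (r : ℝ) (c : ℕ → ℝ) : Prop :=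
  (∀ n, 0 ≤ c n) ∧ Filter.limsup (fun n : ℕ => ((c n / n : ℝ) : EReal)) Filter.atTop ≤ (r : EReal)

/-- Reliability function `E_rf^{(α)}(W, r)`. -/
def Erf [Fintype X] [Fintype Y] (α : ℝ≥0∞) (W : X → Y → ℝ≥0∞) (r : ℝ) : EReal :=
  ⨆ c : {c : ℕ → ℝ // RateOK r c},
    Filter.liminf
      (fun n : ℕ => (((-1 : ℝ) / n : ℝ) : EReal) * eLog2 (simD α (prodCh n W) (c.1 n)))
      Filter.atTop

/-- Strong converse exponent `E_sc^{(α)}(W, r)`. -/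
def Esc [Fintype X] [Fintype Y] (α : ℝ≥0∞) (W : X → Y → ℝ≥0∞) (r : ℝ) : EReal :=
  ⨅ c : {c : ℕ → ℝ // RateOK r c},
    Filter.limsup
      (fun n : ℕ => (((1 : ℝ) / n : ℝ) : EReal) * simD α (prodCh n W) (c.1 n))
      Filter.atTop

/-- The `α`-Rényi simulation rate `R_RST^{(α)}(W)`. -/
def Rrst [Fintype X] [Fintype Y] (α : ℝ≥0∞) (W : X → Y → ℝ≥0∞) : EReal :=
  ⨅ c : {c : ℕ → ℝ // (∀ n, 0 ≤ c n) ∧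
      Filter.limsup (fun n : ℕ => simD α (prodCh n W) (c n)) Filter.atTop = 0},
    Filter.limsup (fun n : ℕ => ((c.1 n / n : ℝ) : EReal)) Filter.atTop

/-- n-fold product of a joint distribution on `X × Y`, as a distribution on pairs of
sequences. -/
def prodJoint [Fintype X] [Fintype Y] (n : ℕ) (P : X × Y → ℝ≥0∞) :
    (Fin n → X) × (Fin n → Y) → ℝ≥0∞ :=
  fun p => ∏ i, P (p.1 i, p.2 i)

/-- n-fold product distribution. -/
def prodDist [Fintype X] (n : ℕ) (P : X → ℝ≥0∞) : (Fin n → X) → ℝ≥0∞ :=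
  fun xs => ∏ i, P (xs i)

/-- The type (empirical count vector) of a sequence. -/
def seqType [Fintype Y] [DecidableEq Y] {n : ℕ} (ys : Fin n → Y) : Y → ℕ :=
  fun y => (Finset.univ.filter fun i => ys i = y).card

/-- The cardinality of the type class of a sequence. -/
def typeClassCard [Fintype Y] [DecidableEq Y] {n : ℕ} (ys : Fin n → Y) : ℕ :=
  (Finset.univ.filter fun zs : Fin n → Y => seqType zs = seqType ys).card

/-- The number of types of sequences in `Y^n`. -/
def numTypes (Y : Type*) [Fintype Y] [DecidableEq Y] (n : ℕ) : ℕ :=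
  (Finset.univ.image fun ys : Fin n → Y => seqType ys).card

/-- `Φ_{Y^n}`: the uniform mixture over type classes of `Y^n`. -/
def PhiY (Y : Type*) [Fintype Y] [DecidableEq Y] (n : ℕ) : (Fin n → Y) → ℝ≥0∞ :=
  fun ys => ((numTypes Y n : ℝ≥0∞) * (typeClassCard ys : ℝ≥0∞))⁻¹

end RST

namespace RST

/-!
For `0 < β < 1` the tilted distribution proportional to `p ^ β * q ^ (1 - β)` attains
`D_β(p ‖ q) = min_r β / (1 - β) * D(r ‖ p) + D(r ‖ q)`. Write `a = α / (1 - α)` and let `t` be the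
coefficient of `I_β(W) - r`, so that `a * (1 - β) = t * β` with `t ∈ [0, 1]`. Since
`t * x ≤ max x 0`, the variational formula bounds each `t * (I_β(W) - r)` by the max-min.

Conversely, `max x 0` is the maximum of `t * x` over `t ∈ [0, 1]` and relative entropy is jointly
convex, so a minimax exchange yields a single `t` valid for all test channels and output
distributions `Q`. Testing with the tilted channel of `W` and `Q` gives, for each `Q`, an input
letter `x` at which `t * (D_β(W_x ‖ Q) - r)` is large, and a second minimax exchange, between `Q`
and the input distribution, turns this into a lower bound on `t * (I_β(W) - r)`.
-/

section FiniteAlphabet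

open Function Set

variable {ι E X Y : Type*}

theorem exists_le_of_le_sum_mul [Fintype ι] {p f : ι → ℝ} {c : ℝ} (hp : p ∈ stdSimplex ℝ ι)
    (h : c ≤ ∑ i, p i * f i) : ∃ i, c ≤ f i := by
  by_contra! hf
  obtain ⟨i, -, hi⟩ : ∃ i ∈ Finset.univ, 0 < p i := Finset.exists_lt_of_sum_lt (by simp [hp.2])
  refine h.not_gt ?_
  calc
    ∑ i, p i * f i < ∑ i, p i * c :=
      Finset.sum_lt_sum (fun j _ => mul_le_mul_of_nonneg_left (hf j).le (hp.1 j))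
        ⟨i, Finset.mem_univ i, mul_lt_mul_of_pos_left (hf i) hi⟩
    _ = c := by rw [← Finset.sum_mul, hp.2, one_mul]

section Minimax

theorem apply_nonneg_of_forall_nonpos_le [AddCommGroup E] [PartialOrder E]
    [IsOrderedAddMonoid E] [Module ℝ E] [PosSMulMono ℝ E] {f : E →ₗ[ℝ] ℝ} {s : ℝ}
    (h : ∀ u ≤ 0, f u ≤ s) {u : E} (hu : 0 ≤ u) : 0 ≤ f u := by
  by_contra! hfu
  have hs : 0 ≤ s := by simpa using h 0 le_rfl
  have hle := h (-((s + 1) / -f u) • u) <| by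
    rw [neg_smul, neg_nonpos]
    exact smul_nonneg (div_nonneg (by linarith) (by linarith)) hu
  rw [map_smul, smul_eq_mul, div_neg, neg_neg, div_mul_cancel₀ _ hfu.ne] at hle
  linarith

theorem exists_mem_stdSimplex_forall_dotProduct_nonneg [Fintype ι] [Nonempty ι]
    {C : Set (ι → ℝ)} (hC : Convex ℝ C) (h : ∀ u ∈ C, ∃ i, 0 ≤ u i) :
    ∃ μ ∈ stdSimplex ℝ ι, ∀ u ∈ C, 0 ≤ ∑ i, μ i * u i := by
  rcases C.eq_empty_or_nonempty with rfl | ⟨u₀, hu₀⟩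
  · exact ⟨_, single_mem_stdSimplex ℝ (Classical.arbitrary ι), by simp⟩
  let N : Set (ι → ℝ) := univ.pi fun _ => Iio 0
  have hdisj : Disjoint N C := disjoint_left.2 fun u hu hu' =>
    let ⟨i, hi⟩ := h u hu'
    (hu i (mem_univ i)).not_ge hi
  obtain ⟨f, s, hfN, hfC⟩ := geometric_hahn_banach_open (convex_pi fun _ _ => convex_Iio 0)
    (isOpen_set_pi finite_univ fun _ _ => isOpen_Iio) hC hdisj
  let m : ι → ℝ := fun i => f (Pi.single i 1)
  have hf (u : ι → ℝ) : f u = ∑ i, m i * u i := by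
    conv_lhs => rw [pi_eq_sum_univ' u]
    simp [m, mul_comm, Pi.single]
  have hf_nonpos (u : ι → ℝ) (hu : u ≤ 0) : f u ≤ s := by
    have hmem : u ∈ closure N := by
      rw [closure_pi_set]
      exact fun i _ => closure_Iio (0 : ℝ) ▸ hu i
    exact closure_minimal (fun v hv => (hfN v hv).le) (isClosed_Iic.preimage f.continuous) hmem
  have hs : 0 ≤ s := by simpa using hf_nonpos 0 le_rfl
  have hm (i : ι) : 0 ≤ m i :=
    apply_nonneg_of_forall_nonpos_le (f := f.toLinearMap) hf_nonpos (by simp)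
  have hM : 0 < ∑ i, m i := by
    refine (Finset.sum_nonneg fun i _ => hm i).lt_of_ne fun hzero => ?_
    have hm_zero (i : ι) : m i = 0 :=
      (Finset.sum_eq_zero_iff_of_nonneg fun i _ => hm i).1 hzero.symm i (Finset.mem_univ i)
    have := (hfN (-1) (by simp)).trans_le (hfC u₀ hu₀)
    simp [hf, hm_zero] at this
  refine ⟨fun i => (∑ j, m j)⁻¹ * m i, ⟨fun i => mul_nonneg (inv_nonneg.2 hM.le) (hm i), ?_⟩,
    fun u hu => ?_⟩
  · rw [← Finset.mul_sum, inv_mul_cancel₀ hM.ne']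
  · simp_rw [mul_assoc, ← Finset.mul_sum, ← hf]
    exact mul_nonneg (inv_nonneg.2 hM.le) (hs.trans (hfC u hu))

variable [AddCommGroup E] [Module ℝ E] {s : Set E}

theorem exists_mem_stdSimplex_forall_sum_mul_nonneg [Fintype ι] [Nonempty ι] {g : ι → E → ℝ}
    (hs : Convex ℝ s) (hg : ∀ i, ConvexOn ℝ s (g i)) (h : ∀ z ∈ s, ∃ i, 0 ≤ g i z) :
    ∃ μ ∈ stdSimplex ℝ ι, ∀ z ∈ s, 0 ≤ ∑ i, μ i * g i z := by
  have hC : Convex ℝ {u : ι → ℝ | ∃ z ∈ s, ∀ i, g i z ≤ u i} := by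
    rintro u ⟨z, hz, hu⟩ v ⟨z', hz', hv⟩ b c hb hc hbc
    exact ⟨b • z + c • z', hs hz hz' hb hc hbc, fun i => ((hg i).2 hz hz' hb hc hbc).trans <|
      add_le_add (mul_le_mul_of_nonneg_left (hu i) hb) (mul_le_mul_of_nonneg_left (hv i) hc)⟩
  obtain ⟨μ, hμ, h_nonneg⟩ := exists_mem_stdSimplex_forall_dotProduct_nonneg hC
    fun u ⟨z, hz, hu⟩ => (h z hz).imp fun i hi => hi.trans (hu i)
  exact ⟨μ, hμ, fun z hz => h_nonneg _ ⟨z, hz, fun _ => le_rfl⟩⟩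

theorem exists_mem_Icc_forall_le_add_mul {f g : E → ℝ} {c : ℝ} (hf : ConvexOn ℝ s f)
    (hg : ConvexOn ℝ s g) (h : ∀ z ∈ s, c ≤ f z + max (g z) 0) :
    ∃ t ∈ Icc (0 : ℝ) 1, ∀ z ∈ s, c ≤ f z + t * g z := by
  obtain ⟨μ, ⟨hμ_nonneg, hμ_sum⟩, hμ⟩ := exists_mem_stdSimplex_forall_sum_mul_nonneg
    (g := ![fun z => f z + g z + -c, fun z => f z + -c]) hf.1
    (Fin.forall_fin_two.2 ⟨(hf.add hg).add_const _, hf.add_const _⟩)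
    (fun z hz => by
      rw [Fin.exists_fin_two]
      rcases max_choice (g z) 0 with hmax | hmax
      · exact .inl (by have := h z hz; simp; linarith)
      · exact .inr (by have := h z hz; simp; linarith))
  rw [Fin.sum_univ_two] at hμ_sum
  refine ⟨μ 0, ⟨hμ_nonneg 0, by linarith [hμ_nonneg 1]⟩, fun z hz => ?_⟩
  have hz' := hμ z hz
  simp only [Fin.sum_univ_two, Matrix.cons_val_zero, Matrix.cons_val_one] at hz'
  linear_combination hz' + (f z - c) * hμ_sum

end Minimax

section RelEntropy

/-- The relative entropy `D(p ‖ q)` in bits of two nonnegative real vectors, meaningful on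
`relEntropyDomain`: a summand with `q i = 0` is `0` by the conventions for `/` and `Real.logb`. -/
def relEntropy [Fintype ι] (p q : ι → ℝ) : ℝ := ∑ i, p i * Real.logb 2 (p i / q i)

/-- The effective domain of the relative entropy: pairs `(p, q)` of nonnegative vectors with `p`
absolutely continuous with respect to `q`. -/
def relEntropyDomain (ι : Type*) : Set ((ι → ℝ) × (ι → ℝ)) :=
  {z | ∀ i, 0 ≤ z.1 i ∧ 0 ≤ z.2 i ∧ (z.2 i = 0 → z.1 i = 0)}

theorem convexOn_mul_logb_two : ConvexOn ℝ (Ici 0) fun x : ℝ => x * Real.logb 2 x :=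
  (Real.convexOn_mul_log.smul (inv_nonneg.2 (Real.log_nonneg one_le_two))).congr fun x _ => by
    simp only [Real.logb, smul_eq_mul]
    ring

theorem mul_mul_logb_mul_div_mul (b c x y : ℝ) :
    c * x * Real.logb b (c * x / (c * y)) = c * (x * Real.logb b (x / y)) := by
  rcases eq_or_ne c 0 with rfl | hc
  · simp
  · rw [mul_div_mul_left _ _ hc, mul_assoc]

theorem convex_relEntropyDomain (ι : Type*) : Convex ℝ (relEntropyDomain ι) := by
  rintro ⟨p, q⟩ h ⟨p', q'⟩ h' b c hb hc - i
  obtain ⟨hp, hq, hpq⟩ := h i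
  obtain ⟨hp', hq', hpq'⟩ := h' i
  simp only [Prod.smul_mk, Prod.mk_add_mk, Pi.add_apply, Pi.smul_apply, smul_eq_mul] at *
  refine ⟨by positivity, by positivity, fun hzero => ?_⟩
  obtain ⟨hbq, hcq'⟩ := (add_eq_zero_iff_of_nonneg (by positivity) (by positivity)).1 hzero
  have hbp : b * p i = 0 := mul_eq_zero.2 ((mul_eq_zero.1 hbq).imp_right hpq)
  have hcp' : c * p' i = 0 := mul_eq_zero.2 ((mul_eq_zero.1 hcq').imp_right hpq')
  rw [hbp, hcp', add_zero]

theorem convex_relEntropyDomain_left (q : ι → ℝ) : Convex ℝ {p | (p, q) ∈ relEntropyDomain ι} := by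
  intro p hp p' hp' b c hb hc hbc
  have h := convex_relEntropyDomain ι hp hp' hb hc hbc
  rwa [Prod.smul_mk, Prod.smul_mk, Prod.mk_add_mk, Convex.combo_self hbc] at h

variable [Fintype ι] {p q : ι → ℝ}

theorem relEntropy_self (p : ι → ℝ) : relEntropy p p = 0 :=
  Finset.sum_eq_zero fun i _ => by by_cases hi : p i = 0 <;> simp [hi]

theorem sum_mul_logb_sum_div_sum_le_relEntropy (h : (p, q) ∈ relEntropyDomain ι) :
    (∑ i, p i) * Real.logb 2 ((∑ i, p i) / ∑ i, q i) ≤ relEntropy p q := by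
  have hp_eq (i : ι) : q i * (p i / q i) = p i := by
    by_cases hi : q i = 0
    · rw [hi, zero_mul]
      exact ((h i).2.2 hi).symm
    · field_simp
  rcases (Finset.sum_nonneg fun i _ => (h i).2.1 : 0 ≤ ∑ i, q i).eq_or_lt with hzero | hpos
  · have hp_zero (i : ι) : p i = 0 := (h i).2.2 <|
      (Finset.sum_eq_zero_iff_of_nonneg fun i _ => (h i).2.1).1 hzero.symm i (Finset.mem_univ i)
    simp [relEntropy, hp_zero]
  have hJensen := convexOn_mul_logb_two.map_sum_le (t := Finset.univ)
    (w := fun i => (∑ j, q j)⁻¹ * q i) (p := fun i => p i / q i)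
    (fun i _ => mul_nonneg (inv_nonneg.2 hpos.le) (h i).2.1)
    (by rw [← Finset.mul_sum, inv_mul_cancel₀ hpos.ne'])
    (fun i _ => div_nonneg (h i).1 (h i).2.1)
  simp only [smul_eq_mul, mul_assoc, ← Finset.mul_sum, hp_eq] at hJensen
  rw [inv_mul_le_iff₀ hpos, mul_inv_cancel_left₀ hpos.ne', inv_mul_eq_div] at hJensen
  refine hJensen.trans_eq (Finset.sum_congr rfl fun i _ => ?_)
  rw [← mul_assoc, hp_eq]

theorem neg_logb_sum_le_relEntropy (hp : ∑ i, p i = 1) (h : (p, q) ∈ relEntropyDomain ι) :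
    -Real.logb 2 (∑ i, q i) ≤ relEntropy p q := by
  simpa [hp, Real.logb_inv] using sum_mul_logb_sum_div_sum_le_relEntropy h

theorem convexOn_relEntropy : ConvexOn ℝ (relEntropyDomain ι) fun z => relEntropy z.1 z.2 := by
  refine ⟨convex_relEntropyDomain ι, ?_⟩
  rintro ⟨p, q⟩ h ⟨p', q'⟩ h' b c hb hc -
  simp only [relEntropy, smul_eq_mul, Finset.mul_sum, ← Finset.sum_add_distrib]
  refine Finset.sum_le_sum fun i _ => ?_
  obtain ⟨hp, hq, hpq⟩ := h i
  obtain ⟨hp', hq', hpq'⟩ := h' i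
  have hmem : (![b * p i, c * p' i], ![b * q i, c * q' i]) ∈ relEntropyDomain (Fin 2) :=
    Fin.forall_fin_two.2
      ⟨⟨mul_nonneg hb hp, mul_nonneg hb hq,
        fun hzero => mul_eq_zero.2 ((mul_eq_zero.1 hzero).imp_right hpq)⟩,
      mul_nonneg hc hp', mul_nonneg hc hq',
        fun hzero => mul_eq_zero.2 ((mul_eq_zero.1 hzero).imp_right hpq')⟩
  simpa [relEntropy, mul_mul_logb_mul_div_mul] using sum_mul_logb_sum_div_sum_le_relEntropy hmem

theorem convexOn_relEntropy_left (q : ι → ℝ) :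
    ConvexOn ℝ {p | (p, q) ∈ relEntropyDomain ι} fun p => relEntropy p q := by
  refine ⟨convex_relEntropyDomain_left q, fun p hp p' hp' b c hb hc hbc => ?_⟩
  have h := convexOn_relEntropy.2 hp hp' hb hc hbc
  rwa [Prod.smul_mk, Prod.smul_mk, Prod.mk_add_mk, Convex.combo_self hbc] at h

end RelEntropy

section GeomMix

/-- The geometric mixture `p ^ β * q ^ (1 - β)`, whose total mass is the Hellinger sum defining the
Rényi divergence of order `β`. -/
def geomMix (β : ℝ) (p q : ι → ℝ) : ι → ℝ := fun i => p i ^ β * q i ^ (1 - β)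

variable {β : ℝ} {p q r : ι → ℝ}

theorem geomMix_nonneg (hp : 0 ≤ p) (hq : 0 ≤ q) : 0 ≤ geomMix β p q := fun i =>
  mul_nonneg (Real.rpow_nonneg (hp i) _) (Real.rpow_nonneg (hq i) _)

theorem geomMix_smul_smul {c : ℝ} (hc : 0 ≤ c) (hβ0 : 0 ≤ β) (hβ1 : β ≤ 1) (hp : 0 ≤ p)
    (hq : 0 ≤ q) : geomMix β (c • p) (c • q) = c • geomMix β p q := by
  ext i
  have hc_eq : c ^ β * c ^ (1 - β) = c := by
    rw [← Real.rpow_add_of_nonneg hc hβ0 (sub_nonneg.2 hβ1), add_sub_cancel, Real.rpow_one]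
  simp only [geomMix, Pi.smul_apply, smul_eq_mul]
  rw [Real.mul_rpow hc (hp i), Real.mul_rpow hc (hq i), mul_mul_mul_comm, hc_eq]

theorem geomMix_mem_relEntropyDomain (hp : (r, p) ∈ relEntropyDomain ι)
    (hq : (r, q) ∈ relEntropyDomain ι) : (r, geomMix β p q) ∈ relEntropyDomain ι := fun i =>
  ⟨(hp i).1, geomMix_nonneg (fun j => (hp j).2.1) (fun j => (hq j).2.1) i, fun hzero =>
    (mul_eq_zero.1 hzero).elim
      (fun h => (hp i).2.2 ((Real.rpow_eq_zero_iff_of_nonneg (hp i).2.1).1 h).1)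
      (fun h => (hq i).2.2 ((Real.rpow_eq_zero_iff_of_nonneg (hq i).2.1).1 h).1)⟩

variable [Fintype ι]

theorem relEntropy_geomMix (hp : (r, p) ∈ relEntropyDomain ι) (hq : (r, q) ∈ relEntropyDomain ι) :
    relEntropy r (geomMix β p q) = β * relEntropy r p + (1 - β) * relEntropy r q := by
  simp only [relEntropy, Finset.mul_sum, ← Finset.sum_add_distrib]
  refine Finset.sum_congr rfl fun i _ => ?_
  rcases eq_or_ne (r i) 0 with hr | hr
  · simp [hr]
  have hpi : 0 < p i := (hp i).2.1.lt_of_ne' fun h => hr ((hp i).2.2 h)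
  have hqi : 0 < q i := (hq i).2.1.lt_of_ne' fun h => hr ((hq i).2.2 h)
  have hpβ := Real.rpow_pos_of_pos hpi β
  have hqβ := Real.rpow_pos_of_pos hqi (1 - β)
  rw [geomMix, Real.logb_div hr (mul_pos hpβ hqβ).ne', Real.logb_mul hpβ.ne' hqβ.ne',
    Real.logb_rpow_eq_mul_logb_of_pos hpi, Real.logb_rpow_eq_mul_logb_of_pos hqi,
    Real.logb_div hr hpi.ne', Real.logb_div hr hqi.ne']
  ring

theorem neg_logb_sum_geomMix_le (hr : ∑ i, r i = 1) (hp : (r, p) ∈ relEntropyDomain ι)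
    (hq : (r, q) ∈ relEntropyDomain ι) :
    -Real.logb 2 (∑ i, geomMix β p q i) ≤ β * relEntropy r p + (1 - β) * relEntropy r q :=
  (neg_logb_sum_le_relEntropy hr (geomMix_mem_relEntropyDomain hp hq)).trans_eq
    (relEntropy_geomMix hp hq)

theorem relEntropy_inv_sum_smul_self {u : ι → ℝ} (hu : ∑ i, u i ≠ 0) :
    relEntropy ((∑ i, u i)⁻¹ • u) u = -Real.logb 2 (∑ i, u i) := by
  have hterm (i : ι) : (∑ j, u j)⁻¹ * u i * Real.logb 2 ((∑ j, u j)⁻¹ * u i / u i) =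
      (∑ j, u j)⁻¹ * -Real.logb 2 (∑ j, u j) * u i := by
    rcases eq_or_ne (u i) 0 with hi | hi
    · simp [hi]
    · rw [mul_div_cancel_right₀ _ hi, Real.logb_inv]
      ring
  simp only [relEntropy, Pi.smul_apply, smul_eq_mul, hterm, ← Finset.mul_sum]
  field_simp

/-- The tilted distribution, proportional to the geometric mixture, attains equality. -/
theorem exists_mem_stdSimplex_add_relEntropy_eq (hβ0 : 0 < β) (hβ1 : β < 1) (hp : 0 ≤ p)
    (hq : 0 ≤ q) (hpq : ∑ i, geomMix β p q i ≠ 0) :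
    ∃ r ∈ stdSimplex ℝ ι, (r, p) ∈ relEntropyDomain ι ∧ (r, q) ∈ relEntropyDomain ι ∧
      β * relEntropy r p + (1 - β) * relEntropy r q = -Real.logb 2 (∑ i, geomMix β p q i) := by
  have hnonneg : 0 ≤ (∑ i, geomMix β p q i)⁻¹ • geomMix β p q := smul_nonneg
    (inv_nonneg.2 (Finset.sum_nonneg fun i _ => geomMix_nonneg hp hq i)) (geomMix_nonneg hp hq)
  have hdom_p : ((∑ i, geomMix β p q i)⁻¹ • geomMix β p q, p) ∈ relEntropyDomain ι := fun i =>
    ⟨hnonneg i, hp i, fun hzero => by simp_all [geomMix, hβ0.ne']⟩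
  have hdom_q : ((∑ i, geomMix β p q i)⁻¹ • geomMix β p q, q) ∈ relEntropyDomain ι := fun i =>
    ⟨hnonneg i, hq i, fun hzero => by simp_all [geomMix, (sub_pos.2 hβ1).ne']⟩
  refine ⟨_, ⟨hnonneg, ?_⟩, hdom_p, hdom_q, ?_⟩
  · simp [← Finset.mul_sum, hpq]
  · rw [← relEntropy_geomMix hdom_p hdom_q, relEntropy_inv_sum_smul_self hpq]

theorem concaveOn_sum_geomMix (hβ0 : 0 ≤ β) (hβ1 : β ≤ 1) (hp : 0 ≤ p) :
    ConcaveOn ℝ (Ici 0) fun q : ι → ℝ => ∑ i, geomMix β p q i := by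
  refine ⟨convex_Ici 0, fun q hq q' hq' b c hb hc hbc => ?_⟩
  simp only [geomMix, smul_eq_mul, Finset.mul_sum, ← Finset.sum_add_distrib]
  refine Finset.sum_le_sum fun i _ => ?_
  have hconc := (Real.concaveOn_rpow (sub_nonneg.2 hβ1) (sub_le_self 1 hβ0)).2 (hq i) (hq' i)
    hb hc hbc
  calc
    _ = p i ^ β * (b • q i ^ (1 - β) + c • q' i ^ (1 - β)) := by
      simp only [smul_eq_mul]
      ring
    _ ≤ _ := mul_le_mul_of_nonneg_left hconc (Real.rpow_nonneg (hp i) _)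

end GeomMix

section JointMass

/-- The real-valued counterpart of `joint`: the mass function of the input `p` followed by the
channel `v`, as a linear map in `v`. -/
def jointMass (p : X → ℝ) : (X → Y → ℝ) →ₗ[ℝ] X × Y → ℝ where
  toFun v z := p z.1 * v z.1 z.2
  map_add' _ _ := funext fun _ => mul_add _ _ _
  map_smul' _ _ := funext fun _ => mul_left_comm _ _ _

theorem jointMass_apply (p : X → ℝ) (v : X → Y → ℝ) (z : X × Y) :
    jointMass p v z = p z.1 * v z.1 z.2 := rfl

variable {p : X → ℝ} {v w : X → Y → ℝ}

theorem jointMass_mem_relEntropyDomain (hp : 0 ≤ p) (h : ∀ x, (v x, w x) ∈ relEntropyDomain Y) :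
    (jointMass p v, jointMass p w) ∈ relEntropyDomain (X × Y) := fun _ =>
  ⟨mul_nonneg (hp _) (h _ _).1, mul_nonneg (hp _) (h _ _).2.1,
    fun hzero => mul_eq_zero.2 ((mul_eq_zero.1 hzero).imp_right (h _ _).2.2)⟩

variable [Fintype X] [Fintype Y]

theorem jointMass_mem_stdSimplex (hp : p ∈ stdSimplex ℝ X) (hv : ∀ x, v x ∈ stdSimplex ℝ Y) :
    jointMass p v ∈ stdSimplex ℝ (X × Y) := by
  refine ⟨fun z => mul_nonneg (hp.1 _) ((hv _).1 _), ?_⟩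
  simp only [jointMass_apply, Fintype.sum_prod_type, ← Finset.mul_sum, (hv _).2, mul_one, hp.2]

theorem relEntropy_jointMass (p : X → ℝ) (v w : X → Y → ℝ) :
    relEntropy (jointMass p v) (jointMass p w) = ∑ x, p x * relEntropy (v x) (w x) := by
  simp only [relEntropy, jointMass_apply, Fintype.sum_prod_type, Finset.mul_sum,
    mul_mul_logb_mul_div_mul]

theorem sum_geomMix_jointMass {β : ℝ} (hβ0 : 0 ≤ β) (hβ1 : β ≤ 1) (hp : 0 ≤ p) (hv : 0 ≤ v)
    (hw : 0 ≤ w) : ∑ z, geomMix β (jointMass p v) (jointMass p w) z =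
      ∑ x, p x * ∑ y, geomMix β (v x) (w x) y := by
  simp only [Fintype.sum_prod_type, Finset.mul_sum]
  refine Finset.sum_congr rfl fun x _ => Finset.sum_congr rfl fun y _ => ?_
  exact congrFun (geomMix_smul_smul (hp x) hβ0 hβ1 (hv x) (hw x)) y

end JointMass

section Dist

variable [Fintype ι] {p : ι → ℝ} {P : ι → ℝ≥0∞}

theorem isDist_ofReal_comp (hp : p ∈ stdSimplex ℝ ι) : IsDist (ENNReal.ofReal ∘ p) := by
  simp [IsDist, ← ENNReal.ofReal_sum_of_nonneg fun i _ => hp.1 i, hp.2]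

theorem IsDist.exists_mem_stdSimplex (hP : IsDist P) :
    ∃ p ∈ stdSimplex ℝ ι, ENNReal.ofReal ∘ p = P := by
  have hP_top (i : ι) : P i ≠ ⊤ :=
    ((Finset.single_le_sum_of_canonicallyOrdered (Finset.mem_univ i)).trans_eq hP).trans_lt
      ENNReal.one_lt_top |>.ne
  refine ⟨fun i => (P i).toReal, ⟨fun i => ENNReal.toReal_nonneg, ?_⟩,
    funext fun i => ENNReal.ofReal_toReal (hP_top i)⟩
  rw [← ENNReal.toReal_sum fun i _ => hP_top i, hP, ENNReal.toReal_one]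

variable [Fintype X] [Fintype Y]

theorem IsChannel.exists_mem_stdSimplex {W : X → Y → ℝ≥0∞} (hW : IsChannel W) :
    ∃ w : X → Y → ℝ, (∀ x, w x ∈ stdSimplex ℝ Y) ∧ (fun x => ENNReal.ofReal ∘ w x) = W := by
  choose w hw h_eq using fun x => IsDist.exists_mem_stdSimplex (hW x)
  exact ⟨w, hw, funext h_eq⟩

theorem isChannel_ofReal_comp {w : X → Y → ℝ} (hw : ∀ x, w x ∈ stdSimplex ℝ Y) :
    IsChannel fun x => ENNReal.ofReal ∘ w x := fun x => isDist_ofReal_comp (hw x)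

theorem joint_ofReal_comp {p : X → ℝ} (hp : 0 ≤ p) (v : X → Y → ℝ) :
    joint (ENNReal.ofReal ∘ p) (fun x => ENNReal.ofReal ∘ v x) = ENNReal.ofReal ∘ jointMass p v :=
  funext fun z => (ENNReal.ofReal_mul (hp z.1)).symm

end Dist

section RenyiDivergence

theorem elog2_ofReal {x : ℝ} (hx : 0 < x) : elog2 (ENNReal.ofReal x) = (Real.logb 2 x : ℝ) := by
  rw [elog2, if_neg (by simpa using hx), if_neg ENNReal.ofReal_ne_top, ENNReal.toReal_ofReal hx.le]

theorem toReal_mul_elog2_div {x y : ℝ} (hx : 0 ≤ x) (hy : 0 ≤ y) (hxy : y = 0 → x = 0) :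
    ((ENNReal.ofReal x).toReal : EReal) * elog2 (ENNReal.ofReal x / ENNReal.ofReal y) =
      (x * Real.logb 2 (x / y) : ℝ) := by
  rcases hx.eq_or_lt with rfl | hx_pos
  · simp
  · have hy_pos : 0 < y := hy.lt_of_ne' fun hzero => hx_pos.ne' (hxy hzero)
    rw [← ENNReal.ofReal_div_of_pos hy_pos, elog2_ofReal (div_pos hx_pos hy_pos),
      ENNReal.toReal_ofReal hx, EReal.coe_mul]

theorem toReal_mul_elog2_div_zero {x : ℝ} (hx : 0 < x) :
    ((ENNReal.ofReal x).toReal : EReal) * elog2 (ENNReal.ofReal x / ENNReal.ofReal 0) = ⊤ := by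
  rw [ENNReal.ofReal_zero, ENNReal.div_zero (ENNReal.ofReal_pos.2 hx).ne', elog2, if_neg (by simp),
    if_pos rfl, ENNReal.toReal_ofReal hx.le, EReal.coe_mul_top_of_pos hx]

theorem ereal_sum_eq_top [Fintype ι] {f : ι → EReal} (hf : ∀ i, f i ≠ ⊥) {i : ι} (hi : f i = ⊤) :
    ∑ j, f j = ⊤ := by
  rw [← Finset.add_sum_erase _ _ (Finset.mem_univ i), hi]
  refine EReal.top_add_of_ne_bot (Finset.sum_induction f (· ≠ ⊥) ?_ (by simp) fun j _ => hf j)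
  exact fun x y hx hy => EReal.add_ne_bot_iff.2 ⟨hx, hy⟩

theorem ereal_coe_sum [Fintype ι] (f : ι → ℝ) : ((∑ i, f i : ℝ) : EReal) = ∑ i, (f i : EReal) :=
  map_sum (⟨⟨Real.toEReal, rfl⟩, EReal.coe_add⟩ : ℝ →+ EReal) f Finset.univ

variable [Fintype ι] {p q : ι → ℝ}

theorem renyiD_one_eq_sum (P Q : ι → ℝ≥0∞) :
    renyiD 1 P Q = ∑ i, ((P i).toReal : EReal) * elog2 (P i / Q i) := by
  simp [renyiD]

theorem renyiD_one_ofReal_comp (h : (p, q) ∈ relEntropyDomain ι) :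
    renyiD 1 (ENNReal.ofReal ∘ p) (ENNReal.ofReal ∘ q) = (relEntropy p q : ℝ) := by
  rw [renyiD_one_eq_sum, relEntropy, ereal_coe_sum]
  exact Finset.sum_congr rfl fun i _ => toReal_mul_elog2_div (h i).1 (h i).2.1 (h i).2.2

theorem renyiD_one_ofReal_comp_eq_top (hp : 0 ≤ p) (hq : 0 ≤ q)
    (h : (p, q) ∉ relEntropyDomain ι) :
    renyiD 1 (ENNReal.ofReal ∘ p) (ENNReal.ofReal ∘ q) = ⊤ := by
  have hterm_top {i : ι} (hqi : q i = 0) (hpi : p i ≠ 0) :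
      ((ENNReal.ofReal (p i)).toReal : EReal) *
        elog2 (ENNReal.ofReal (p i) / ENNReal.ofReal (q i)) = ⊤ :=
    hqi ▸ toReal_mul_elog2_div_zero ((hp i).lt_of_ne' hpi)
  obtain ⟨i, hqi, hpi⟩ : ∃ i, q i = 0 ∧ p i ≠ 0 := by
    by_contra! hcon
    exact h fun i => ⟨hp i, hq i, hcon i⟩
  rw [renyiD_one_eq_sum]
  refine ereal_sum_eq_top (fun j => ?_) (hterm_top hqi hpi)
  by_cases hj : q j = 0 ∧ p j ≠ 0
  · exact (hterm_top hj.1 hj.2).trans_ne top_ne_bot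
  · have hac : q j = 0 → p j = 0 := fun hqj => by_contra fun hpj => hj ⟨hqj, hpj⟩
    exact (toReal_mul_elog2_div (hp j) (hq j) hac).trans_ne (EReal.coe_ne_bot _)

theorem renyiD_one_ofReal_comp_nonneg (hp : p ∈ stdSimplex ℝ ι) (hq : q ∈ stdSimplex ℝ ι) :
    0 ≤ renyiD 1 (ENNReal.ofReal ∘ p) (ENNReal.ofReal ∘ q) := by
  by_cases h : (p, q) ∈ relEntropyDomain ι
  · rw [renyiD_one_ofReal_comp h]
    exact_mod_cast by simpa [hq.2] using neg_logb_sum_le_relEntropy hp.2 h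
  · rw [renyiD_one_ofReal_comp_eq_top hp.1 hq.1 h]
    exact le_top

variable {β : ℝ}

theorem renyiD_ofReal_eq (hβ0 : 0 < β) (hβ1 : β < 1) (hp : 0 ≤ p) (hq : 0 ≤ q) :
    renyiD (ENNReal.ofReal β) (ENNReal.ofReal ∘ p) (ENNReal.ofReal ∘ q) =
      ((β - 1)⁻¹ : ℝ) * elog2 (ENNReal.ofReal (∑ i, geomMix β p q i)) := by
  have hβ0_le := hβ0.le
  have hβ1_le := (sub_pos.2 hβ1).le
  rw [renyiD, if_neg (by simpa using hβ0), if_neg (by simpa using hβ1.ne),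
    if_neg ENNReal.ofReal_ne_top, ENNReal.toReal_ofReal hβ0_le,
    ENNReal.ofReal_sum_of_nonneg fun i _ => geomMix_nonneg hp hq i]
  congr 3 with i
  rw [geomMix, ENNReal.ofReal_mul (Real.rpow_nonneg (hp i) _), comp_apply, comp_apply,
    ENNReal.ofReal_rpow_of_nonneg (hp i) hβ0_le, ENNReal.ofReal_rpow_of_nonneg (hq i) hβ1_le]

theorem coe_le_renyiD_ofReal {d : ℝ} (hβ0 : 0 < β) (hβ1 : β < 1) (hp : 0 ≤ p) (hq : 0 ≤ q)
    (h : ∑ i, geomMix β p q i ≤ 2 ^ ((β - 1) * d)) :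
    (d : EReal) ≤ renyiD (ENNReal.ofReal β) (ENNReal.ofReal ∘ p) (ENNReal.ofReal ∘ q) := by
  have hβ_neg : β - 1 < 0 := sub_neg.2 hβ1
  rw [renyiD_ofReal_eq hβ0 hβ1 hp hq]
  have hsum : 0 ≤ ∑ i, geomMix β p q i := Finset.sum_nonneg fun i _ => geomMix_nonneg hp hq i
  rcases hsum.eq_or_lt with hzero | hpos
  · simp [← hzero, elog2, EReal.coe_mul_bot_of_neg (inv_lt_zero.2 hβ_neg)]
  · rw [elog2_ofReal hpos, ← EReal.coe_mul, EReal.coe_le_coe_iff, inv_mul_eq_div,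
      le_div_iff_of_neg hβ_neg, mul_comm, Real.logb_le_iff_le_rpow one_lt_two hpos]
    exact h

theorem renyiD_ofReal_le_add {r : ι → ℝ} (hβ0 : 0 < β) (hβ1 : β < 1) (hr : ∑ i, r i = 1)
    (hp : (r, p) ∈ relEntropyDomain ι) (hq : (r, q) ∈ relEntropyDomain ι) :
    renyiD (ENNReal.ofReal β) (ENNReal.ofReal ∘ p) (ENNReal.ofReal ∘ q) ≤
      (β / (1 - β) * relEntropy r p + relEntropy r q : ℝ) := by
  have hmix := geomMix_mem_relEntropyDomain (β := β) hp hq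
  have hpos : 0 < ∑ i, geomMix β p q i := by
    refine (Finset.sum_nonneg fun i _ => (hmix i).2.1).lt_of_ne' fun hzero => ?_
    have hr_zero (i : ι) : r i = 0 := (hmix i).2.2 <|
      (Finset.sum_eq_zero_iff_of_nonneg fun i _ => (hmix i).2.1).1 hzero i (Finset.mem_univ i)
    simp [hr_zero] at hr
  rw [renyiD_ofReal_eq hβ0 hβ1 (fun i => (hp i).2.1) (fun i => (hq i).2.1), elog2_ofReal hpos,
    ← EReal.coe_mul, EReal.coe_le_coe_iff]
  have hβ_sub := sub_pos.2 hβ1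
  calc
    (β - 1)⁻¹ * Real.logb 2 (∑ i, geomMix β p q i)
      = (1 - β)⁻¹ * -Real.logb 2 (∑ i, geomMix β p q i) := by
        rw [← neg_sub 1 β, inv_neg, neg_mul, mul_neg]
    _ ≤ (1 - β)⁻¹ * (β * relEntropy r p + (1 - β) * relEntropy r q) := by
        gcongr
        exact neg_logb_sum_geomMix_le hr hp hq
    _ = β / (1 - β) * relEntropy r p + relEntropy r q := by field_simp

end RenyiDivergence

section LowerBound

theorem coe_mul_sub_coe_le_iff {a r : ℝ} (ha : 0 < a) (x y : EReal) :
    (a : EReal) * (x - r) ≤ y ↔ x ≤ y / a + r := by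
  rw [mul_comm, ← EReal.le_div_iff_mul_le (by exact_mod_cast ha) (EReal.coe_ne_top a),
    EReal.sub_le_iff_le_add (.inl (EReal.coe_ne_bot r)) (.inl (EReal.coe_ne_top r))]

theorem coe_mul_le_max_zero {a : ℝ} (ha0 : 0 ≤ a) (ha1 : a ≤ 1) (x : EReal) :
    (a : EReal) * x ≤ max x 0 := by
  rcases le_total x 0 with hx | hx
  · exact (EReal.mul_nonpos_iff.2 (.inl ⟨by exact_mod_cast ha0, hx⟩)).trans (le_max_right _ _)
  · calc
      (a : EReal) * x ≤ 1 * x := mul_le_mul_of_nonneg_right (by exact_mod_cast ha1) hx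
      _ ≤ max x 0 := (one_mul x).trans_le (le_max_left _ _)

variable [Fintype X] [Fintype Y]

theorem le_renyiMI_jointMass_iff {b : ℝ≥0∞} {p : X → ℝ} {v : X → Y → ℝ} {c : EReal}
    (hp : 0 ≤ p) (hv : ∀ x, v x ∈ stdSimplex ℝ Y) :
    c ≤ renyiMI b (ENNReal.ofReal ∘ jointMass p v) ↔ ∀ q ∈ stdSimplex ℝ Y, c ≤
      renyiD b (ENNReal.ofReal ∘ jointMass p v) (ENNReal.ofReal ∘ jointMass p fun _ => q) := by
  have hmarg : margX (ENNReal.ofReal ∘ jointMass p v) = ENNReal.ofReal ∘ p := funext fun x => by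
    simp only [margX, ← joint_ofReal_comp hp, joint, ← Finset.mul_sum,
      isChannel_ofReal_comp hv x, mul_one]
  rw [renyiMI, hmarg, le_iInf_iff]
  constructor
  · intro h q hq
    rw [← joint_ofReal_comp hp fun _ => q]
    exact h ⟨_, isDist_ofReal_comp hq⟩
  · rintro h ⟨Q, hQ⟩
    obtain ⟨q, hq, rfl⟩ := hQ.exists_mem_stdSimplex
    have hq_le := h q hq
    rwa [← joint_ofReal_comp hp fun _ => q] at hq_le

/-- The expression `a · D(P · V ‖ P · W) + max (I₁(P · V) - r) 0` whose max-min over `P` and `V` is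
the exponent; the theorem has `a = α / (1 - α)`. -/
def exponentObjective (a r : ℝ) (W : X → Y → ℝ≥0∞) (P : X → ℝ≥0∞) (V : X → Y → ℝ≥0∞) : EReal :=
  a * renyiD 1 (joint P V) (joint P W) + max (renyiMI 1 (joint P V) - r) 0

variable {a r s β : ℝ} {W V : X → Y → ℝ≥0∞} {P : X → ℝ≥0∞}

theorem exponentObjective_nonneg (ha : 0 ≤ a) (hW : IsChannel W) (hP : IsDist P)
    (hV : IsChannel V) : 0 ≤ exponentObjective a r W P V := by
  obtain ⟨w, hw, rfl⟩ := hW.exists_mem_stdSimplex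
  obtain ⟨v, hv, rfl⟩ := hV.exists_mem_stdSimplex
  obtain ⟨p, hp, rfl⟩ := hP.exists_mem_stdSimplex
  rw [exponentObjective, joint_ofReal_comp hp.1, joint_ofReal_comp hp.1]
  exact add_nonneg (mul_nonneg (by exact_mod_cast ha) (renyiD_one_ofReal_comp_nonneg
    (jointMass_mem_stdSimplex hp hv) (jointMass_mem_stdSimplex hp hw))) (le_max_right _ _)

theorem iSup_iInf_exponentObjective_nonneg [Nonempty X] (ha : 0 ≤ a) (hW : IsChannel W) :
    0 ≤ ⨆ P : {P : X → ℝ≥0∞ // IsDist P}, ⨅ V : {V : X → Y → ℝ≥0∞ // IsChannel V},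
      exponentObjective a r W P.1 V.1 :=
  have hP := isDist_ofReal_comp (single_mem_stdSimplex ℝ (Classical.arbitrary X))
  le_iSup_of_le ⟨_, hP⟩ <| le_iInf fun V => exponentObjective_nonneg ha hW hP V.2

theorem renyiMI_jointMass_le_add {p : X → ℝ} {v w : X → Y → ℝ} (hβ0 : 0 < β) (hβ1 : β < 1)
    (hp : p ∈ stdSimplex ℝ X) (hv : ∀ x, v x ∈ stdSimplex ℝ Y) (hw : ∀ x, w x ∈ stdSimplex ℝ Y)
    (h : (jointMass p v, jointMass p w) ∈ relEntropyDomain (X × Y)) :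
    renyiMI (ENNReal.ofReal β) (ENNReal.ofReal ∘ jointMass p w) ≤
      (β / (1 - β) * relEntropy (jointMass p v) (jointMass p w) : ℝ) +
        renyiMI 1 (ENNReal.ofReal ∘ jointMass p v) := by
  have hpv := jointMass_mem_stdSimplex hp hv
  rw [add_comm, ← EReal.sub_le_iff_le_add (.inl (EReal.coe_ne_bot _)) (.inl (EReal.coe_ne_top _)),
    le_renyiMI_jointMass_iff hp.1 hv]
  intro q hq
  rw [EReal.sub_le_iff_le_add (.inl (EReal.coe_ne_bot _)) (.inl (EReal.coe_ne_top _)), add_comm]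
  by_cases hpq : (jointMass p v, jointMass p fun _ => q) ∈ relEntropyDomain (X × Y)
  · rw [renyiD_one_ofReal_comp hpq, ← EReal.coe_add]
    exact ((le_renyiMI_jointMass_iff hp.1 hw).1 le_rfl q hq).trans
      (renyiD_ofReal_le_add hβ0 hβ1 hpv.2 h hpq)
  · rw [renyiD_one_ofReal_comp_eq_top hpv.1
      (jointMass_mem_stdSimplex hp fun _ => hq).1 hpq, EReal.coe_add_top]
    exact le_top

theorem coe_mul_renyiMI_sub_le_exponentObjective (hs0 : 0 < s) (hs1 : s ≤ 1) (hβ0 : 0 < β)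
    (hβ1 : β < 1) (hs : a * (1 - β) = s * β) (hW : IsChannel W) (hP : IsDist P)
    (hV : IsChannel V) :
    s * (renyiMI (ENNReal.ofReal β) (joint P W) - r) ≤ exponentObjective a r W P V := by
  have hβ_sub : 0 < 1 - β := sub_pos.2 hβ1
  have ha : 0 < a := pos_of_mul_pos_left (hs ▸ mul_pos hs0 hβ0) hβ_sub.le
  obtain ⟨w, hw, rfl⟩ := hW.exists_mem_stdSimplex
  obtain ⟨v, hv, rfl⟩ := hV.exists_mem_stdSimplex
  obtain ⟨p, hp, rfl⟩ := hP.exists_mem_stdSimplex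
  rw [exponentObjective, joint_ofReal_comp hp.1, joint_ofReal_comp hp.1]
  by_cases h : (jointMass p v, jointMass p w) ∈ relEntropyDomain (X × Y)
  swap
  · rw [renyiD_one_ofReal_comp_eq_top (jointMass_mem_stdSimplex hp hv).1
      (jointMass_mem_stdSimplex hp hw).1 h, EReal.coe_mul_top_of_pos ha, EReal.top_add_of_ne_bot]
    · exact le_top
    · exact ne_bot_of_le_ne_bot EReal.zero_ne_bot (le_max_right _ _)
  set D := relEntropy (jointMass p v) (jointMass p w)
  set I := renyiMI 1 (ENNReal.ofReal ∘ jointMass p v)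
  have hs_nonneg : (0 : EReal) ≤ s := by exact_mod_cast hs0.le
  have hcoeff : s * (β / (1 - β) * D) = a * D := by
    rw [← mul_assoc, ← mul_div_assoc, ← hs, mul_div_cancel_right₀ _ hβ_sub.ne']
  calc
    _ ≤ s * ((β / (1 - β) * D : ℝ) + I - r) :=
      mul_le_mul_of_nonneg_left
        (EReal.sub_le_sub (renyiMI_jointMass_le_add hβ0 hβ1 hp hv hw h) le_rfl) hs_nonneg
    _ = (a * D : ℝ) + s * (I - r) := by
      rw [sub_eq_add_neg, add_assoc, ← sub_eq_add_neg,
        EReal.left_distrib_of_nonneg_of_ne_top hs_nonneg (EReal.coe_ne_top s), ← EReal.coe_mul,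
        hcoeff]
    _ ≤ _ := by
      rw [renyiD_one_ofReal_comp h, ← EReal.coe_mul]
      exact add_le_add_right (coe_mul_le_max_zero hs0.le hs1 _) _

theorem coe_mul_renyiCap_sub_le_iSup_iInf (hs0 : 0 < s) (hs1 : s ≤ 1) (hβ0 : 0 < β)
    (hβ1 : β < 1) (hs : a * (1 - β) = s * β) (hW : IsChannel W) :
    s * (renyiCap (ENNReal.ofReal β) W - r) ≤
      ⨆ P : {P : X → ℝ≥0∞ // IsDist P}, ⨅ V : {V : X → Y → ℝ≥0∞ // IsChannel V},
        exponentObjective a r W P.1 V.1 := by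
  rw [coe_mul_sub_coe_le_iff hs0]
  refine iSup_le fun P => (coe_mul_sub_coe_le_iff hs0 _ _).1 ?_
  exact le_iSup_of_le P <| le_iInf fun V =>
    coe_mul_renyiMI_sub_le_exponentObjective hs0 hs1 hβ0 hβ1 hs hW P.2 V.2

end LowerBound

section TestPairs

/-- The pairs of a test channel `v` and an output distribution `q` at which both relative entropies
in the minimax problem for the input `p` and the channel `w` are finite. -/
def testPairs [Fintype Y] (p : X → ℝ) (w : X → Y → ℝ) : Set ((X → Y → ℝ) × (Y → ℝ)) :=
  {z | ((∀ x, z.1 x ∈ stdSimplex ℝ Y) ∧ z.2 ∈ stdSimplex ℝ Y) ∧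
    (jointMass p z.1, jointMass p w) ∈ relEntropyDomain (X × Y) ∧
    (jointMass p z.1, jointMass p fun _ => z.2) ∈ relEntropyDomain (X × Y)}

variable [Fintype Y]

theorem convex_testPairs (p : X → ℝ) (w : X → Y → ℝ) : Convex ℝ (testPairs p w) := by
  have hprob : Convex ℝ {z : (X → Y → ℝ) × (Y → ℝ) |
      (∀ x, z.1 x ∈ stdSimplex ℝ Y) ∧ z.2 ∈ stdSimplex ℝ Y} := fun z hz z' hz' b c hb hc hbc =>
    ⟨fun x => convex_stdSimplex ℝ Y (hz.1 x) (hz'.1 x) hb hc hbc,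
      convex_stdSimplex ℝ Y hz.2 hz'.2 hb hc hbc⟩
  have hfst := (convex_relEntropyDomain_left (jointMass p w)).linear_preimage
    (jointMass p ∘ₗ LinearMap.fst ℝ (X → Y → ℝ) (Y → ℝ))
  have hsnd := (convex_relEntropyDomain (X × Y)).linear_preimage
    ((jointMass p).prodMap
      (jointMass p ∘ₗ LinearMap.pi fun _ : X => (LinearMap.id : (Y → ℝ) →ₗ[ℝ] _)))
  exact hprob.inter (hfst.inter hsnd)

theorem exists_mem_testPairs_self [Nonempty X] {p : X → ℝ} {w : X → Y → ℝ} (hp : 0 ≤ p)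
    (hw : ∀ x, w x ∈ stdSimplex ℝ Y) : ∃ q, (w, q) ∈ testPairs p w := by
  have : Nonempty Y := not_isEmpty_iff.1 fun _ => by simpa using (hw (Classical.arbitrary X)).2
  have hcard : (0 : ℝ) < (Fintype.card Y : ℝ)⁻¹ := by positivity
  refine ⟨fun _ => (Fintype.card Y : ℝ)⁻¹, ⟨hw, fun _ => hcard.le, by simp⟩, ?_, ?_⟩
  · exact jointMass_mem_relEntropyDomain hp fun x y => ⟨(hw x).1 y, (hw x).1 y, id⟩
  · exact jointMass_mem_relEntropyDomain hp fun x y =>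
      ⟨(hw x).1 y, hcard.le, fun hzero => absurd hzero hcard.ne'⟩

variable [Fintype X] (p : X → ℝ) (w : X → Y → ℝ)

theorem convexOn_testPairs_relEntropy_channel :
    ConvexOn ℝ (testPairs p w) fun z => relEntropy (jointMass p z.1) (jointMass p w) :=
  ((convexOn_relEntropy_left (jointMass p w)).comp_linearMap
    (jointMass p ∘ₗ LinearMap.fst ℝ (X → Y → ℝ) (Y → ℝ))).subset
    (fun _ hz => hz.2.1) (convex_testPairs p w)

theorem convexOn_testPairs_relEntropy_output :
    ConvexOn ℝ (testPairs p w) fun z => relEntropy (jointMass p z.1) (jointMass p fun _ => z.2) :=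
  (convexOn_relEntropy.comp_linearMap ((jointMass p).prodMap
    (jointMass p ∘ₗ LinearMap.pi fun _ : X => (LinearMap.id : (Y → ℝ) →ₗ[ℝ] _)))).subset
    (fun _ hz => hz.2.2) (convex_testPairs p w)

end TestPairs

section UpperBound

variable [Fintype X] [Fintype Y] {a r t c β d : ℝ} {p : X → ℝ} {w : X → Y → ℝ}

theorem le_add_max_of_le_exponentObjective (hp : p ∈ stdSimplex ℝ X)
    (h : ∀ V, IsChannel V → (c : EReal) ≤
      exponentObjective a r (fun x => ENNReal.ofReal ∘ w x) (ENNReal.ofReal ∘ p) V)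
    {z : (X → Y → ℝ) × (Y → ℝ)} (hz : z ∈ testPairs p w) :
    c ≤ a * relEntropy (jointMass p z.1) (jointMass p w) +
      max (relEntropy (jointMass p z.1) (jointMass p fun _ => z.2) - r) 0 := by
  obtain ⟨⟨hv, hq⟩, hvw, hvq⟩ := hz
  have hMI := (le_renyiMI_jointMass_iff (b := 1) hp.1 hv).1 le_rfl z.2 hq
  rw [renyiD_one_ofReal_comp hvq] at hMI
  have hc := h _ (isChannel_ofReal_comp hv)
  rw [exponentObjective, joint_ofReal_comp hp.1, joint_ofReal_comp hp.1,
    renyiD_one_ofReal_comp hvw] at hc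
  rw [← EReal.coe_le_coe_iff, EReal.coe_add, EReal.coe_mul,
    EReal.coe_strictMono.monotone.map_max, EReal.coe_sub, EReal.coe_zero]
  exact hc.trans (add_le_add_right (max_le_max_right 0 (EReal.sub_le_sub hMI le_rfl)) _)

theorem exists_mem_Icc_forall_testPairs_le (ha : 0 ≤ a) (hp : p ∈ stdSimplex ℝ X)
    (h : ∀ V, IsChannel V → (c : EReal) ≤
      exponentObjective a r (fun x => ENNReal.ofReal ∘ w x) (ENNReal.ofReal ∘ p) V) :
    ∃ t ∈ Icc (0 : ℝ) 1, ∀ z ∈ testPairs p w,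
      c ≤ a * relEntropy (jointMass p z.1) (jointMass p w) +
        t * (relEntropy (jointMass p z.1) (jointMass p fun _ => z.2) - r) :=
  exists_mem_Icc_forall_le_add_mul ((convexOn_testPairs_relEntropy_channel p w).smul ha)
    ((convexOn_testPairs_relEntropy_output p w).add_const (-r))
    fun _ hz => le_add_max_of_le_exponentObjective hp h hz

theorem exists_sum_geomMix_le_of_forall_testPairs (ht : 0 < t) (hβ0 : 0 < β) (hβ1 : β < 1)
    (hβ : a * (1 - β) = t * β) (hp : p ∈ stdSimplex ℝ X) (hw : ∀ x, w x ∈ stdSimplex ℝ Y)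
    (h : ∀ z ∈ testPairs p w, c ≤ a * relEntropy (jointMass p z.1) (jointMass p w) +
      t * (relEntropy (jointMass p z.1) (jointMass p fun _ => z.2) - r))
    {q : Y → ℝ} (hq : q ∈ stdSimplex ℝ Y) :
    ∃ x, ∑ y, geomMix β (w x) q y ≤ 2 ^ ((β - 1) * (c / t + r)) := by
  by_cases hzero : ∃ x, ∑ y, geomMix β (w x) q y = 0
  · obtain ⟨x, hx⟩ := hzero
    exact ⟨x, hx.trans_le (by positivity)⟩
  push Not at hzero
  choose v hv hvw hvq htilt using fun x =>
    exists_mem_stdSimplex_add_relEntropy_eq hβ0 hβ1 (hw x).1 hq.1 (hzero x)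
  have hc := h (v, q) ⟨⟨hv, hq⟩, jointMass_mem_relEntropyDomain hp.1 hvw,
    jointMass_mem_relEntropyDomain hp.1 hvq⟩
  have hsum : c ≤ ∑ x, p x * (a * relEntropy (v x) (w x) + t * (relEntropy (v x) q - r)) := by
    refine hc.trans_eq ?_
    simp only [relEntropy_jointMass, mul_add, mul_sub, mul_left_comm (p _),
      Finset.sum_add_distrib, Finset.sum_sub_distrib, ← Finset.mul_sum, ← Finset.sum_mul, hp.2,
      one_mul]
  obtain ⟨x, hx⟩ := exists_le_of_le_sum_mul hp hsum
  have hpos : 0 < ∑ y, geomMix β (w x) q y :=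
    (Finset.sum_nonneg fun y _ => geomMix_nonneg (hw x).1 hq.1 y).lt_of_ne' (hzero x)
  refine ⟨x, (Real.logb_le_iff_le_rpow one_lt_two hpos).1 ?_⟩
  have hlog : (1 - β) * c ≤ t * -Real.logb 2 (∑ y, geomMix β (w x) q y) - t * (1 - β) * r := by
    rw [← htilt x]
    linear_combination (1 - β) * hx + relEntropy (v x) (w x) * hβ
  have hdiv : t * (c / t) = c := mul_div_cancel₀ c ht.ne'
  refine le_of_mul_le_mul_left ?_ ht
  linear_combination hlog + (1 - β) * hdiv

theorem coe_le_renyiCap [Nonempty X] (hβ0 : 0 < β) (hβ1 : β < 1) (hw : ∀ x, w x ∈ stdSimplex ℝ Y)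
    (h : ∀ q ∈ stdSimplex ℝ Y, ∃ x, ∑ y, geomMix β (w x) q y ≤ 2 ^ ((β - 1) * d)) :
    (d : EReal) ≤ renyiCap (ENNReal.ofReal β) fun x => ENNReal.ofReal ∘ w x := by
  obtain ⟨p, hp, hp_nonneg⟩ := exists_mem_stdSimplex_forall_sum_mul_nonneg
    (g := fun x q => -(∑ y, geomMix β (w x) q y) + 2 ^ ((β - 1) * d)) (convex_stdSimplex ℝ Y)
    (fun x => ((concaveOn_sum_geomMix hβ0.le hβ1.le (hw x).1).neg.subset (fun _ hq => hq.1)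
      (convex_stdSimplex ℝ Y)).add_const _)
    (fun q hq => (h q hq).imp fun x hx => by linarith)
  refine le_iSup_of_le ⟨_, isDist_ofReal_comp hp⟩ ?_
  rw [joint_ofReal_comp hp.1, le_renyiMI_jointMass_iff hp.1 hw]
  intro q hq
  refine coe_le_renyiD_ofReal hβ0 hβ1 (jointMass_mem_stdSimplex hp hw).1
    (jointMass_mem_stdSimplex hp fun _ => hq).1 ?_
  rw [sum_geomMix_jointMass hβ0.le hβ1.le hp.1 (fun x => (hw x).1) fun _ => hq.1]
  have hq_nonneg := hp_nonneg q hq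
  simp only [mul_add, Finset.sum_add_distrib, ← Finset.sum_mul, hp.2, one_mul, mul_neg,
    Finset.sum_neg_distrib] at hq_nonneg
  linarith

theorem exists_le_mul_renyiCap_sub [Nonempty X] {W : X → Y → ℝ≥0∞} {P : X → ℝ≥0∞} (ha : 0 < a)
    (hW : IsChannel W) (hP : IsDist P)
    (h : ∀ V, IsChannel V → (c : EReal) ≤ exponentObjective a r W P V) (hc : 0 < c) :
    ∃ t ∈ Ioc (0 : ℝ) 1, (c : EReal) ≤ t * (renyiCap (ENNReal.ofReal (a / (a + t))) W - r) := by
  obtain ⟨w, hw, rfl⟩ := hW.exists_mem_stdSimplex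
  obtain ⟨p, hp, rfl⟩ := hP.exists_mem_stdSimplex
  obtain ⟨t, ⟨ht0, ht1⟩, ht⟩ := exists_mem_Icc_forall_testPairs_le ha.le hp h
  have ht_pos : 0 < t := by
    refine ht0.lt_of_ne' fun hzero => ?_
    obtain ⟨q, hq⟩ := exists_mem_testPairs_self hp.1 hw
    have hc_le := ht _ hq
    simp only [relEntropy_self, hzero, mul_zero, zero_mul, add_zero] at hc_le
    exact hc.not_ge hc_le
  have hβ1 : a / (a + t) < 1 := (div_lt_one (by positivity)).2 (lt_add_of_pos_right a ht_pos)
  have hcap : ((c / t + r : ℝ) : EReal) ≤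
      renyiCap (ENNReal.ofReal (a / (a + t))) fun x => ENNReal.ofReal ∘ w x :=
    coe_le_renyiCap (by positivity) hβ1 hw fun q hq =>
      exists_sum_geomMix_le_of_forall_testPairs ht_pos (by positivity) hβ1
        (by field_simp; ring) hp hw ht hq
  have hc_eq : c = t * (c / t + r - r) := by field_simp; ring
  refine ⟨t, ⟨ht_pos, ht1⟩, ?_⟩
  calc
    (c : EReal) = t * ((c / t + r : ℝ) - r) := by rw [← EReal.coe_sub, ← EReal.coe_mul, ← hc_eq]
    _ ≤ _ := mul_le_mul_of_nonneg_left (EReal.sub_le_sub hcap le_rfl) (by exact_mod_cast ht0)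

end UpperBound

section Reparametrization

variable {α β t : ℝ}

theorem mul_one_sub_div_mul_one_sub_pos (hα0 : 0 < α) (hα1 : α < 1) (hβ0 : 0 < β) (hβ1 : β < 1) :
    0 < α * (1 - β) / (β * (1 - α)) :=
  div_pos (mul_pos hα0 (sub_pos.2 hβ1)) (mul_pos hβ0 (sub_pos.2 hα1))

theorem mul_one_sub_div_mul_one_sub_le_one (hα1 : α < 1) (hβ0 : 0 < β) (hαβ : α ≤ β) :
    α * (1 - β) / (β * (1 - α)) ≤ 1 := by
  rw [div_le_one (mul_pos hβ0 (sub_pos.2 hα1))]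
  linarith

theorem div_one_sub_mul_one_sub_eq (hβ0 : β ≠ 0) :
    α / (1 - α) * (1 - β) = α * (1 - β) / (β * (1 - α)) * β := by
  field_simp

theorem exists_mul_one_sub_div_mul_one_sub_eq (hα0 : 0 < α) (hα1 : α < 1) (ht : t ∈ Ioc (0 : ℝ) 1) :
    ∃ β, α ≤ β ∧ β ≤ 1 ∧ α / (1 - α) / (α / (1 - α) + t) = β ∧
      α * (1 - β) / (β * (1 - α)) = t := by
  obtain ⟨ht0, ht1⟩ := ht
  have hα_sub : 0 < 1 - α := sub_pos.2 hα1
  have hden : 0 < α + t * (1 - α) := by positivity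
  have hβ : α / (1 - α) / (α / (1 - α) + t) = α / (α + t * (1 - α)) := by field_simp
  refine ⟨α / (α + t * (1 - α)), ?_, ?_, hβ, ?_⟩
  · rw [le_div_iff₀ hden]
    nlinarith [mul_nonneg hα0.le (mul_nonneg hα_sub.le (sub_nonneg.2 ht1))]
  · exact (div_le_one hden).2 (le_add_of_nonneg_right (mul_pos ht0 hα_sub).le)
  · field_simp
    ring

end Reparametrization

end FiniteAlphabet

theorem variational_expression_general
    {X Y : Type*} [Fintype X] [Fintype Y] [Nonempty X]
    (W : X → Y → ℝ≥0∞) (hW : IsChannel W)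
    (α : ℝ) (hα0 : 0 < α) (hα1 : α < 1) (r : ℝ) :
    (⨆ β : {β : ℝ // α ≤ β ∧ β ≤ 1},
        (((α * (1 - β.1)) / (β.1 * (1 - α)) : ℝ) : EReal) *
          (renyiCap (ENNReal.ofReal β.1) W - (r : EReal))) =
      ⨆ P : {P : X → ℝ≥0∞ // IsDist P},
        ⨅ V : {V : X → Y → ℝ≥0∞ // IsChannel V},
          ((α / (1 - α) : ℝ) : EReal) * renyiD 1 (joint P.1 V.1) (joint P.1 W) +
            max (renyiMI 1 (joint P.1 V.1) - (r : EReal)) 0 := by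
  have ha : 0 < α / (1 - α) := div_pos hα0 (sub_pos.2 hα1)
  change _ = ⨆ P : {P : X → ℝ≥0∞ // IsDist P}, ⨅ V : {V : X → Y → ℝ≥0∞ // IsChannel V},
    exponentObjective (α / (1 - α)) r W P.1 V.1
  apply le_antisymm
  · refine iSup_le fun ⟨β, hαβ, hβ_le⟩ => ?_
    have hβ0 : 0 < β := hα0.trans_le hαβ
    rcases hβ_le.eq_or_lt with rfl | hβ1
    · simpa using iSup_iInf_exponentObjective_nonneg ha.le hW
    · exact coe_mul_renyiCap_sub_le_iSup_iInf (mul_one_sub_div_mul_one_sub_pos hα0 hα1 hβ0 hβ1)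
        (mul_one_sub_div_mul_one_sub_le_one hα1 hβ0 hαβ) hβ0 hβ1
        (div_one_sub_mul_one_sub_eq hβ0.ne') hW
  · refine iSup_le fun P => EReal.ge_of_forall_gt_iff_ge.1 fun c hc => ?_
    rcases le_or_gt c 0 with hc0 | hc0
    · exact le_iSup_of_le ⟨1, hα1.le, le_rfl⟩ (by simpa using hc0)
    · obtain ⟨t, ht, hct⟩ := exists_le_mul_renyiCap_sub ha hW P.2
        (fun V hV => le_iInf_iff.1 hc.le ⟨V, hV⟩) hc0
      obtain ⟨β, hαβ, hβ1, hβ, hcoeff⟩ := exists_mul_one_sub_div_mul_one_sub_eq hα0 hα1 ht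
      rw [hβ] at hct
      exact le_iSup_of_le ⟨β, hαβ, hβ1⟩ (by rwa [hcoeff])

/-- **Proposition 12 (variational expression).**  For `α ∈ (0,1)` and `r ≥ 0`,
`max_{α ≤ β ≤ 1} (α(1-β))/(β(1-α)) (I_β(W) - r)` equals the max over input
distributions `P_X` of the min over channels `Ŵ : X → Y` of
`α/(1-α) · D(P_X·Ŵ ‖ P_X·W) + |I(X:Y)_{P_X·Ŵ} - r|⁺`. -/
theorem variational_expression
    {X Y : Type*} [Fintype X] [Fintype Y] [Nonempty X] [Nonempty Y]
    (W : X → Y → ℝ≥0∞) (hW : IsChannel W)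
    (α : ℝ) (hα0 : 0 < α) (hα1 : α < 1) (r : ℝ) (hr : 0 ≤ r) :
    (⨆ β : {β : ℝ // α ≤ β ∧ β ≤ 1},
        (((α * (1 - β.1)) / (β.1 * (1 - α)) : ℝ) : EReal) *
          (renyiCap (ENNReal.ofReal β.1) W - (r : EReal))) =
      ⨆ P : {P : X → ℝ≥0∞ // IsDist P},
        ⨅ V : {V : X → Y → ℝ≥0∞ // IsChannel V},
          ((α / (1 - α) : ℝ) : EReal) * renyiD 1 (joint P.1 V.1) (joint P.1 W) +
            max (renyiMI 1 (joint P.1 V.1) - (r : EReal)) 0 :=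
  variational_expression_general W hW α hα0 hα1 r

end RST
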